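/- arXiv:2601.04411 — 5 statements merged into one kernel-verified Lean document; each statement's English description precedes it below -/
import Mathlib

section
/- Let η > 0 and p₀ ∈ (0,1). Define φ(p) := (2p − 1)/√(p(1−p)) and p(t) := 1/2 + (1/2)·(φ(p₀) − (η/2)·t) / √(4 + (φ(p₀) − (η/2)·t)²) for t ≥ 0. Then p is differentiable, p(0) = p₀, p(t) ∈ (0,1) for all t ≥ 0, p solves the ODE dp/dt = −η·p(t)^{3/2}·(1−p(t))^{3/2}, and the late-time asymptotic p(t) ~ 4/(η²·t²) holds as t → ∞, i.e. t²·p(t) → 4/η². -/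
/-!
In the variable `u = φ(p)` the noise-free GRPO flow is the uniform motion `du/dt = -η/2`. The
inverse of `φ` is the sigmoid `σ(u) = 1/2 + u / (2√(4 + u²))`, and everything follows from the
identity `σ(u) (1 - σ(u)) = 1 / (4 + u²)`: it turns the derivative `σ'(u) = 2 / (4 + u²)^{3/2}` into
`2 (σ(u) (1 - σ(u)))^{3/2}`, and, as `σ → 0` at `-∞`, it shows that `u² σ(u) → 1` there.
-/

open Filter Set Topology

/-- The algebraic sigmoid `σ`, with the constant `4` chosen so that it inverts `algLogit`. -/
noncomputable def algSigmoid (u : ℝ) : ℝ :=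
  1 / 2 + (1 / 2) * (u / √(4 + u ^ 2))

/-- The algebraic analogue of the logit, written `φ` in the paper: the coordinate on `(0, 1)` in
which the flow moves at constant speed. At `x ≤ 0` and `x ≥ 1` its value is the junk value `0`. -/
noncomputable def algLogit (x : ℝ) : ℝ :=
  (2 * x - 1) / √(x * (1 - x))

theorem four_add_algLogit_sq {x : ℝ} (hx : x ∈ Ioo 0 1) :
    4 + algLogit x ^ 2 = (x * (1 - x))⁻¹ := by
  have h0 : x ≠ 0 := hx.1.ne'
  have h1 : 1 - x ≠ 0 := (sub_pos.2 hx.2).ne'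
  rw [algLogit, div_pow, Real.sq_sqrt (mul_nonneg hx.1.le (sub_pos.2 hx.2).le)]
  field_simp
  ring

theorem algSigmoid_algLogit {x : ℝ} (hx : x ∈ Ioo 0 1) : algSigmoid (algLogit x) = x := by
  have hsqrt : √(x * (1 - x)) ≠ 0 := (Real.sqrt_pos.2 (mul_pos hx.1 (sub_pos.2 hx.2))).ne'
  rw [algSigmoid, four_add_algLogit_sq hx, Real.sqrt_inv, algLogit]
  field_simp
  ring

theorem algSigmoid_neg (u : ℝ) : algSigmoid (-u) = 1 - algSigmoid u := by
  rw [algSigmoid, algSigmoid, neg_sq]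
  ring

theorem algSigmoid_pos (u : ℝ) : 0 < algSigmoid u := by
  have hs : 0 < √(4 + u ^ 2) := by positivity
  have hu : -√(4 + u ^ 2) < u := Real.neg_sqrt_lt_of_sq_lt (by linarith)
  have hratio : -1 < u / √(4 + u ^ 2) := by rwa [lt_div_iff₀ hs, neg_one_mul]
  rw [algSigmoid]
  linarith

theorem algSigmoid_lt_one (u : ℝ) : algSigmoid u < 1 := by
  have h := algSigmoid_pos (-u)
  rwa [algSigmoid_neg, sub_pos] at h

theorem algSigmoid_le_half {u : ℝ} (hu : u ≤ 0) : algSigmoid u ≤ 1 / 2 := by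
  have hratio : u / √(4 + u ^ 2) ≤ 0 := div_nonpos_of_nonpos_of_nonneg hu (Real.sqrt_nonneg _)
  rw [algSigmoid]
  linarith

theorem algSigmoid_mul_one_sub (u : ℝ) :
    algSigmoid u * (1 - algSigmoid u) = (4 + u ^ 2)⁻¹ := by
  have hpos : 0 < 4 + u ^ 2 := by positivity
  calc algSigmoid u * (1 - algSigmoid u)
      = 1 / 4 * (1 - u ^ 2 / √(4 + u ^ 2) ^ 2) := by rw [algSigmoid]; ring
    _ = 1 / 4 * (1 - u ^ 2 / (4 + u ^ 2)) := by rw [Real.sq_sqrt hpos.le]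
    _ = (4 + u ^ 2)⁻¹ := by field_simp; ring

theorem algSigmoid_rpow_mul_one_sub_rpow (u r : ℝ) :
    algSigmoid u ^ r * (1 - algSigmoid u) ^ r = ((4 + u ^ 2) ^ r)⁻¹ := by
  rw [← Real.mul_rpow (algSigmoid_pos u).le (sub_pos.2 (algSigmoid_lt_one u)).le,
    algSigmoid_mul_one_sub, Real.inv_rpow (by positivity)]

theorem hasDerivAt_div_sqrt_add_sq {c : ℝ} (hc : 0 < c) (u : ℝ) :
    HasDerivAt (fun v => v / √(c + v ^ 2)) (c * ((c + u ^ 2) ^ ((3 : ℝ) / 2))⁻¹) u := by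
  have hpos : 0 < c + u ^ 2 := by positivity
  have hs : √(c + u ^ 2) ≠ 0 := (Real.sqrt_pos.2 hpos).ne'
  have hsqrt : HasDerivAt (fun v => √(c + v ^ 2)) (u / √(c + u ^ 2)) u := by
    refine (((hasDerivAt_pow 2 u).const_add c).sqrt hpos.ne').congr_deriv ?_
    field_simp
    norm_num
  have hrpow : (c + u ^ 2) ^ ((3 : ℝ) / 2) = √(c + u ^ 2) ^ 3 := by
    rw [Real.rpow_div_two_eq_sqrt _ hpos.le]
    exact_mod_cast Real.rpow_natCast _ 3
  refine ((hasDerivAt_id u).div hsqrt hs).congr_deriv ?_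
  rw [hrpow]
  simp only [id]
  field_simp
  rw [Real.sq_sqrt hpos.le]
  ring

theorem hasDerivAt_algSigmoid (u : ℝ) :
    HasDerivAt algSigmoid
      (2 * (algSigmoid u ^ ((3 : ℝ) / 2) * (1 - algSigmoid u) ^ ((3 : ℝ) / 2))) u := by
  rw [algSigmoid_rpow_mul_one_sub_rpow]
  refine (((hasDerivAt_div_sqrt_add_sq four_pos u).const_mul (1 / 2)).const_add
    (1 / 2)).congr_deriv ?_
  ring

theorem tendsto_inv_add_sq_atBot (c : ℝ) :
    Tendsto (fun u : ℝ => (c + u ^ 2)⁻¹) atBot (𝓝 0) := by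
  have hsq : Tendsto (fun u : ℝ => u ^ 2) atBot atTop := by
    simpa only [pow_two, id] using tendsto_id.atBot_mul_atBot₀ tendsto_id
  exact (tendsto_atTop_add_const_left _ c hsq).inv_tendsto_atTop

theorem tendsto_algSigmoid_atBot : Tendsto algSigmoid atBot (𝓝 0) := by
  have hbound : ∀ᶠ u in atBot, algSigmoid u ≤ 2 * (4 + u ^ 2)⁻¹ := by
    filter_upwards [eventually_le_atBot 0] with u hu
    rw [← algSigmoid_mul_one_sub]
    nlinarith [algSigmoid_pos u, algSigmoid_le_half hu]
  have hlim : Tendsto (fun u : ℝ => 2 * (4 + u ^ 2)⁻¹) atBot (𝓝 0) := by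
    simpa using (tendsto_inv_add_sq_atBot 4).const_mul 2
  exact squeeze_zero' (.of_forall fun u => (algSigmoid_pos u).le) hbound hlim

theorem tendsto_sq_mul_algSigmoid_atBot :
    Tendsto (fun u => u ^ 2 * algSigmoid u) atBot (𝓝 1) := by
  have heq (u : ℝ) : (1 - 4 * (4 + u ^ 2)⁻¹) / (1 - algSigmoid u) = u ^ 2 * algSigmoid u := by
    have hpos : 4 + u ^ 2 ≠ 0 := by positivity
    rw [div_eq_iff (sub_pos.2 (algSigmoid_lt_one u)).ne', mul_assoc, algSigmoid_mul_one_sub]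
    field_simp
    ring
  have hnum : Tendsto (fun u : ℝ => 1 - 4 * (4 + u ^ 2)⁻¹) atBot (𝓝 1) := by
    simpa using ((tendsto_inv_add_sq_atBot 4).const_mul 4).const_sub 1
  have hden : Tendsto (fun u => 1 - algSigmoid u) atBot (𝓝 1) := by
    simpa using tendsto_algSigmoid_atBot.const_sub 1
  simpa only [Pi.div_def, heq, div_one] using hnum.div hden one_ne_zero

theorem tendsto_div_sub_mul_atTop (a : ℝ) {b : ℝ} (hb : b ≠ 0) :
    Tendsto (fun t => t / (a - b * t)) atTop (𝓝 (-b)⁻¹) := by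
  have hlim : Tendsto (fun t => a / t - b) atTop (𝓝 (-b)) := by
    simpa using (tendsto_const_nhds.div_atTop tendsto_id).sub_const b
  refine (hlim.inv₀ (neg_ne_zero.2 hb)).congr' ?_
  filter_upwards [eventually_ne_atTop 0] with t ht
  rw [div_sub' ht, inv_div, mul_comm t b]

theorem tendsto_sq_mul_algSigmoid_sub_mul_atTop (a : ℝ) {b : ℝ} (hb : 0 < b) :
    Tendsto (fun t => t ^ 2 * algSigmoid (a - b * t)) atTop (𝓝 (1 / b ^ 2)) := by
  have hu : Tendsto (fun t => a - b * t) atTop atBot :=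
    tendsto_const_nhds.add_atBot (tendsto_neg_atTop_atBot.comp (tendsto_id.const_mul_atTop hb))
  have hlim := ((tendsto_div_sub_mul_atTop a hb.ne').pow 2).mul
    (tendsto_sq_mul_algSigmoid_atBot.comp hu)
  have hval : (-b)⁻¹ ^ 2 * 1 = 1 / b ^ 2 := by simp
  rw [hval] at hlim
  refine hlim.congr' ?_
  filter_upwards [hu.eventually_ne_atBot 0] with t ht
  rw [Function.comp_apply, ← mul_assoc, ← mul_pow, div_mul_cancel₀ t ht]

theorem grpo_noise_free_solution_general (η p₀ : ℝ) (hp₀ : p₀ ∈ Ioo (0 : ℝ) 1)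
    (φ : ℝ → ℝ) (hφ : ∀ x, φ x = (2 * x - 1) / √(x * (1 - x)))
    (p : ℝ → ℝ)
    (hpdef : ∀ t, p t = 1 / 2 + (1 / 2) *
      ((φ p₀ - (η / 2) * t) / √(4 + (φ p₀ - (η / 2) * t) ^ 2))) :
    p 0 = p₀ ∧
    (∀ t, p t ∈ Ioo (0 : ℝ) 1) ∧
    (∀ t, HasDerivAt p (-η * p t ^ ((3 : ℝ) / 2) * (1 - p t) ^ ((3 : ℝ) / 2)) t) ∧
    (0 < η → Tendsto (fun t => t ^ 2 * p t) atTop (𝓝 (4 / η ^ 2))) := by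
  obtain rfl : φ = algLogit := funext hφ
  obtain rfl : p = fun t => algSigmoid (algLogit p₀ - (η / 2) * t) := funext hpdef
  refine ⟨?initial, fun t => ⟨algSigmoid_pos _, algSigmoid_lt_one _⟩, fun t => ?ode, fun hη => ?lim⟩
  case initial => simpa using algSigmoid_algLogit hp₀
  case ode =>
    have hu : HasDerivAt (fun t => algLogit p₀ - (η / 2) * t) (-(η / 2)) t := by
      simpa using ((hasDerivAt_id t).const_mul (η / 2)).const_sub (algLogit p₀)
    exact ((hasDerivAt_algSigmoid _).comp t hu).congr_deriv (by ring)
  case lim =>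
    have hval : 4 / η ^ 2 = 1 / (η / 2) ^ 2 := by field_simp; norm_num
    rw [hval]
    exact tendsto_sq_mul_algSigmoid_sub_mul_atTop _ (half_pos hη)

/-- The explicit solution of the noise-free GRPO mean-field
ODE `dp/dt = −η·p^{3/2}(1−p)^{3/2}`: with `φ(p) = (2p−1)/√(p(1−p))` and
`p(t) = 1/2 + (1/2)·(φ(p₀) − (η/2)t)/√(4 + (φ(p₀) − (η/2)t)²)`, the function
`p` satisfies `p(0) = p₀`, stays in `(0,1)` for `t ≥ 0`, is differentiable and
solves the ODE for `t ≥ 0`, and obeys the late-time asymptotic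
`t²·p(t) → 4/η²` as `t → ∞`. -/
theorem grpo_noise_free_solution (η p₀ : ℝ) (hη : 0 < η)
    (hp₀ : p₀ ∈ Set.Ioo (0:ℝ) 1)
    (φ : ℝ → ℝ) (hφ : ∀ x, φ x = (2 * x - 1) / Real.sqrt (x * (1 - x)))
    (p : ℝ → ℝ)
    (hpdef : ∀ t, p t = 1 / 2 + (1 / 2) *
      ((φ p₀ - (η / 2) * t) / Real.sqrt (4 + (φ p₀ - (η / 2) * t) ^ 2))) :
    p 0 = p₀ ∧
    (∀ t ≥ (0:ℝ), p t ∈ Set.Ioo (0:ℝ) 1) ∧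
    (∀ t ≥ (0:ℝ), HasDerivAt p
      (-η * p t ^ ((3:ℝ) / 2) * (1 - p t) ^ ((3:ℝ) / 2)) t) ∧
    Filter.Tendsto (fun t => t ^ 2 * p t) Filter.atTop (nhds (4 / η ^ 2)) := by
  obtain ⟨hinit, hmem, hode, hlim⟩ := grpo_noise_free_solution_general η p₀ hp₀ φ hφ p hpdef
  exact ⟨hinit, fun t _ => hmem t, fun t _ => hode t, hlim hη⟩
end

section
/- Let y : [0,∞) → Δ^{K−1} be a differentiable solution of the collision flow dy/dτ = y ⊙ y − s₂(y)·y, and write s₂(τ) := Σ_i y_i(τ)², s₃(τ) := Σ_i y_i(τ)³. Then: (a) the exact identity ds₂/dτ = 2(s₃ − s₂²) = 2·Σ_i y_i (y_i − s₂)² holds, so s₂ is nondecreasing; (b) since s₃ ≤ s₂^{3/2} on the simplex (by the ℓ³–ℓ² norm inequality), one has the upper bound ds₂/dτ ≤ 2(s₂^{3/2} − s₂²); (c) Σ_i (y_i − s₂)² = s₂(K·s₂ − 1), hence ds₂/dτ ≤ 2·(max_i y_i)·s₂·(K·s₂ − 1). -/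
open Finset

/-!
Draw an index `i` with probability `y i`: the random variable `y i` then has mean `s₂` and second
moment `s₃`, so `ds₂/dτ = 2 (s₃ - s₂²)` is twice a variance. Replacing the weights `y i` in that
variance by their maximum leaves the unweighted sum of squared deviations from `s₂`, which `∑ y = 1`
evaluates in closed form.
-/

section WeightedSums

variable {ι R : Type*} {s : Finset ι}

section CommRing

variable [CommRing R]

theorem sum_mul_sub_sq (w x : ι → R) (a : R) :
    ∑ i ∈ s, w i * (x i - a) ^ 2 =
      ∑ i ∈ s, w i * x i ^ 2 - 2 * a * ∑ i ∈ s, w i * x i + a ^ 2 * ∑ i ∈ s, w i := by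
  simp only [mul_sum, ← sum_sub_distrib, ← sum_add_distrib]
  exact sum_congr rfl fun i _ => by ring

theorem sum_cube_sub_sq_sum_sq_eq_sum_mul_sq {x : ι → R} (hx : ∑ i ∈ s, x i = 1) :
    ∑ i ∈ s, x i ^ 3 - (∑ i ∈ s, x i ^ 2) ^ 2 =
      ∑ i ∈ s, x i * (x i - ∑ j ∈ s, x j ^ 2) ^ 2 := by
  rw [sum_mul_sub_sq, hx]
  simp only [← pow_succ', ← sq]
  ring

theorem sum_sq_sub_sum_sq {x : ι → R} (hx : ∑ i ∈ s, x i = 1) :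
    ∑ i ∈ s, (x i - ∑ j ∈ s, x j ^ 2) ^ 2 =
      (∑ i ∈ s, x i ^ 2) * (#s * ∑ i ∈ s, x i ^ 2 - 1) := by
  have h := sum_mul_sub_sq (s := s) 1 x (∑ j ∈ s, x j ^ 2)
  simp only [Pi.one_apply, one_mul, sum_const, nsmul_one, hx] at h
  rw [h]
  ring

end CommRing

theorem sum_mul_le_sup'_mul_sum [Semiring R] [LinearOrder R] [IsOrderedRing R]
    (hs : s.Nonempty) (w : ι → R) {f : ι → R} (hf : ∀ i ∈ s, 0 ≤ f i) :
    ∑ i ∈ s, w i * f i ≤ s.sup' hs w * ∑ i ∈ s, f i := by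
  rw [mul_sum]
  exact sum_le_sum fun i hi => mul_le_mul_of_nonneg_right (le_sup' w hi) (hf i hi)

section Ordered

variable [CommRing R] [LinearOrder R] [IsOrderedRing R]

theorem sq_sum_sq_le_sum_cube {x : ι → R} (hx₀ : ∀ i ∈ s, 0 ≤ x i) (hx : ∑ i ∈ s, x i = 1) :
    (∑ i ∈ s, x i ^ 2) ^ 2 ≤ ∑ i ∈ s, x i ^ 3 := by
  rw [← sub_nonneg, sum_cube_sub_sq_sum_sq_eq_sum_mul_sq hx]
  exact sum_nonneg fun i hi => mul_nonneg (hx₀ i hi) (sq_nonneg _)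

theorem sum_cube_sub_sq_sum_sq_le_sup'_mul (hs : s.Nonempty) {x : ι → R}
    (hx : ∑ i ∈ s, x i = 1) :
    ∑ i ∈ s, x i ^ 3 - (∑ i ∈ s, x i ^ 2) ^ 2 ≤
      s.sup' hs x * ((∑ i ∈ s, x i ^ 2) * (#s * ∑ i ∈ s, x i ^ 2 - 1)) := by
  rw [sum_cube_sub_sq_sum_sq_eq_sum_mul_sq hx, ← sum_sq_sub_sum_sq hx]
  exact sum_mul_le_sup'_mul_sum hs x fun i _ => sq_nonneg _

end Ordered

theorem sum_rpow_le_rpow_sum {f : ι → ℝ} (hf : ∀ i ∈ s, 0 ≤ f i) {p : ℝ} (hp : 1 ≤ p) :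
    ∑ i ∈ s, f i ^ p ≤ (∑ i ∈ s, f i) ^ p := by
  have rpow_eq {a : ℝ} (ha : 0 ≤ a) : a ^ p = a * a ^ (p - 1) := by
    rw [← Real.rpow_one_add' ha (by linarith), add_sub_cancel]
  calc ∑ i ∈ s, f i ^ p
      = ∑ i ∈ s, f i * f i ^ (p - 1) := sum_congr rfl fun i hi => rpow_eq (hf i hi)
    _ ≤ ∑ i ∈ s, f i * (∑ j ∈ s, f j) ^ (p - 1) := by
        gcongr with i hi
        · exact hf i hi
        · exact hf i hi
        · exact single_le_sum hf hi
    _ = (∑ i ∈ s, f i) ^ p := by rw [← sum_mul, ← rpow_eq (sum_nonneg hf)]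

theorem sum_pow_le_rpow_sum_pow {x : ι → ℝ} (hx : ∀ i ∈ s, 0 ≤ x i) {m n : ℕ} (hm : 0 < m)
    (hmn : m ≤ n) : ∑ i ∈ s, x i ^ n ≤ (∑ i ∈ s, x i ^ m) ^ ((n : ℝ) / m) := by
  have hm' : (0 : ℝ) < m := Nat.cast_pos.mpr hm
  have hexp : 1 ≤ (n : ℝ) / m := (one_le_div hm').mpr (Nat.cast_le.mpr hmn)
  calc ∑ i ∈ s, x i ^ n
      = ∑ i ∈ s, (x i ^ m) ^ ((n : ℝ) / m) := sum_congr rfl fun i hi => by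
        rw [← Real.rpow_natCast_mul (hx i hi), mul_div_cancel₀ _ hm'.ne', Real.rpow_natCast]
    _ ≤ (∑ i ∈ s, x i ^ m) ^ ((n : ℝ) / m) :=
        sum_rpow_le_rpow_sum (fun i hi => pow_nonneg (hx i hi) m) hexp

theorem sum_cube_le_sum_sq_rpow {x : ι → ℝ} (hx : ∀ i ∈ s, 0 ≤ x i) :
    ∑ i ∈ s, x i ^ 3 ≤ (∑ i ∈ s, x i ^ 2) ^ ((3 : ℝ) / 2) :=
  mod_cast sum_pow_le_rpow_sum_pow hx two_pos (by norm_num : 2 ≤ 3)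

end WeightedSums

section Flow

variable {ι : Type*} [Fintype ι]

/-- The vector field `x ⊙ x - s₂(x) x` whose integral curves in the simplex are the trajectories
of the collision flow. It is defined on all of `ι → R`, since the evolution of power sums along it
is purely algebraic. -/
def collisionField {R : Type*} [CommRing R] (x : ι → R) (i : ι) : R :=
  x i * x i - (∑ k, x k ^ 2) * x i

section Derivative

variable {𝕜 : Type*} [NontriviallyNormedField 𝕜] {y : 𝕜 → ι → 𝕜} {S : Set 𝕜} {t : 𝕜}

theorem hasDerivWithinAt_sum_pow_collisionField
    (hy : HasDerivWithinAt y (collisionField (y t)) S t) (n : ℕ) :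
    HasDerivWithinAt (fun u => ∑ i, y u i ^ n)
      (n * (∑ i, y t i ^ (n + 1) - (∑ i, y t i ^ 2) * ∑ i, y t i ^ n)) S t := by
  refine (HasDerivWithinAt.fun_sum fun i _ =>
    (hasDerivWithinAt_pi.mp hy i).fun_pow n).congr_deriv ?_
  rw [mul_sum univ _ (∑ i, y t i ^ 2), ← sum_sub_distrib, mul_sum]
  refine sum_congr rfl fun i _ => ?_
  cases n with
  | zero => simp
  | succ n => rw [collisionField, Nat.add_sub_cancel]; ring

theorem hasDerivWithinAt_sum_sq_collisionField
    (hy : HasDerivWithinAt y (collisionField (y t)) S t) :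
    HasDerivWithinAt (fun u => ∑ i, y u i ^ 2)
      (2 * (∑ i, y t i ^ 3 - (∑ i, y t i ^ 2) ^ 2)) S t := by
  simpa only [Nat.cast_ofNat, Nat.reduceAdd, ← sq] using
    hasDerivWithinAt_sum_pow_collisionField hy 2

end Derivative

theorem monotoneOn_sum_sq_collisionField {y : ℝ → ι → ℝ} {S : Set ℝ} (hS : Convex ℝ S)
    (hsimp : ∀ t ∈ S, y t ∈ stdSimplex ℝ ι)
    (hy : ∀ t ∈ S, HasDerivWithinAt y (collisionField (y t)) S t) :
    MonotoneOn (fun t => ∑ i, y t i ^ 2) S := by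
  have hderiv t (ht : t ∈ S) := hasDerivWithinAt_sum_sq_collisionField (hy t ht)
  refine monotoneOn_of_hasDerivWithinAt_nonneg hS (fun t ht => (hderiv t ht).continuousWithinAt)
    (fun t ht => (hderiv t (interior_subset ht)).mono interior_subset) fun t ht => ?_
  obtain ⟨hnonneg, hsum⟩ := hsimp t (interior_subset ht)
  exact mul_nonneg zero_le_two (sub_nonneg.mpr (sq_sum_sq_le_sum_cube (fun i _ => hnonneg i) hsum))

end Flow

/-- Along a solution `y(τ)` of the collision flow
`dy/dτ = y ⊙ y − s₂(y)·y` on the simplex, with `s₂ = Σ y_i²`, `s₃ = Σ y_i³`: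
(a) `ds₂/dτ = 2(s₃ − s₂²) = 2·Σ y_i(y_i − s₂)² ≥ 0`, so `s₂` is nondecreasing;
(b) `s₃ ≤ s₂^{3/2}`, hence `ds₂/dτ ≤ 2(s₂^{3/2} − s₂²)`;
(c) `Σ_i (y_i − s₂)² = s₂(K·s₂ − 1)`, hence
`ds₂/dτ ≤ 2·(max_i y_i)·s₂·(K·s₂ − 1)`. -/
theorem collision_flow_s2_evolution {K : ℕ} (hK : 0 < K)
    (y : ℝ → Fin K → ℝ)
    (hsimp : ∀ τ ≥ (0:ℝ), y τ ∈ stdSimplex ℝ (Fin K))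
    (hflow : ∀ τ ≥ (0:ℝ), ∀ i, HasDerivAt (fun u => y u i)
      (y τ i * y τ i - (∑ k, y τ k ^ 2) * y τ i) τ) :
    (∀ τ ≥ (0:ℝ),
      HasDerivAt (fun u => ∑ k, y u k ^ 2)
        (2 * ((∑ k, y τ k ^ 3) - (∑ k, y τ k ^ 2) ^ 2)) τ ∧
      2 * ((∑ k, y τ k ^ 3) - (∑ k, y τ k ^ 2) ^ 2) =
        2 * ∑ k, y τ k * (y τ k - ∑ j, y τ j ^ 2) ^ 2 ∧
      0 ≤ 2 * ((∑ k, y τ k ^ 3) - (∑ k, y τ k ^ 2) ^ 2) ∧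
      (∑ k, y τ k ^ 3) ≤ (∑ k, y τ k ^ 2) ^ ((3:ℝ) / 2) ∧
      2 * ((∑ k, y τ k ^ 3) - (∑ k, y τ k ^ 2) ^ 2) ≤
        2 * ((∑ k, y τ k ^ 2) ^ ((3:ℝ) / 2) - (∑ k, y τ k ^ 2) ^ 2) ∧
      (∑ k, (y τ k - ∑ j, y τ j ^ 2) ^ 2) =
        (∑ k, y τ k ^ 2) * (K * (∑ k, y τ k ^ 2) - 1) ∧
      2 * ((∑ k, y τ k ^ 3) - (∑ k, y τ k ^ 2) ^ 2) ≤
        2 * (Finset.univ.sup' (Finset.univ_nonempty_iff.mpr ⟨⟨0, hK⟩⟩) (y τ)) *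
          ((∑ k, y τ k ^ 2) * (K * (∑ k, y τ k ^ 2) - 1))) ∧
    MonotoneOn (fun τ => ∑ k, y τ k ^ 2) (Set.Ici 0) := by
  have hflow' τ (hτ : τ ≥ 0) (S : Set ℝ) : HasDerivWithinAt y (collisionField (y τ)) S τ :=
    (hasDerivAt_pi.mpr (hflow τ hτ)).hasDerivWithinAt
  refine ⟨fun τ hτ => ?_, monotoneOn_sum_sq_collisionField (convex_Ici 0) hsimp
    fun τ hτ => hflow' τ hτ _⟩
  obtain ⟨hnonneg, hsum⟩ := hsimp τ hτ
  have hderiv := hasDerivWithinAt_sum_sq_collisionField (hflow' τ hτ Set.univ)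
  have hvar := sum_cube_sub_sq_sum_sq_eq_sum_mul_sq hsum
  have hvar_nonneg := sq_sum_sq_le_sum_cube (fun i _ => hnonneg i) hsum
  have hcube := sum_cube_le_sum_sq_rpow (s := univ) fun i _ => hnonneg i
  have hdev := sum_sq_sub_sum_sq hsum
  have hmax := sum_cube_sub_sq_sum_sq_le_sup'_mul (univ_nonempty_iff.mpr ⟨⟨0, hK⟩⟩) hsum
  rw [card_univ, Fintype.card_fin] at hdev hmax
  refine ⟨hasDerivWithinAt_univ.mp hderiv, by rw [hvar], by linarith, hcube, by linarith, hdev, ?_⟩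
  rw [mul_assoc]
  exact mul_le_mul_of_nonneg_left hmax zero_le_two
end

section
/- Let y : [0,∞) → Δ^{K−1} be a differentiable solution of the collision flow dy/dτ = y ⊙ y − s₂(y)·y. For indices i ≠ j set δ_{ij}(τ) := y_i(τ) − y_j(τ). Then δ_{ij}′(τ) = δ_{ij}(τ)·(y_i(τ) + y_j(τ) − s₂(τ)), hence δ_{ij}(τ) = δ_{ij}(0)·exp(∫₀^τ (y_i + y_j − s₂) du); in particular the sign of y_i(τ) − y_j(τ) equals the sign of y_i(0) − y_j(0) for all τ ≥ 0, and if m is the unique index maximizing y_i(0) then y_m(τ) > y_i(τ) for all i ≠ m and all τ ≥ 0. -/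
open Finset

/-!
Subtracting `yᵢ' = yᵢ² - s yᵢ` and `yⱼ' = yⱼ² - s yⱼ` factors `yᵢ - yⱼ` out of its own derivative,
so the difference solves the scalar linear equation `δ' = (yᵢ + yⱼ - s) δ`. Multiplying by the
integrating factor `exp (-∫ (yᵢ + yⱼ - s))` gives a constant, and the solution is the initial value
times a positive exponential. The collision flow is the case `s = ∑ k, yₖ²`.
-/

theorem real_sign_mul_of_pos_right (r : ℝ) {c : ℝ} (hc : 0 < c) :
    Real.sign (r * c) = Real.sign r := by
  simp [Real.sign, mul_neg_iff, hc, hc.not_gt]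

section LinearODE

variable {E : Type*} [NormedAddCommGroup E] [NormedSpace ℝ E] {a b : ℝ}

theorem hasDerivWithinAt_Ici_integral_of_continuousOn_Icc [CompleteSpace E] {g : ℝ → E}
    (hg : ContinuousOn g (Set.Icc a b)) {t : ℝ} (ht : t ∈ Set.Ico a b) :
    HasDerivWithinAt (fun r => ∫ u in a..r, g u) (g t) (Set.Ici t) t := by
  have hIcc : Set.Icc a b ∈ nhdsWithin t (Set.Ioi t) := Icc_mem_nhdsGT_of_mem ht
  refine intervalIntegral.integral_hasDerivWithinAt_right ?_ (t := Set.Ioi t) ?_ ?_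
  · exact (hg.mono (Set.Icc_subset_Icc_right ht.2.le)).intervalIntegrable_of_Icc ht.1
  · exact (hg.stronglyMeasurableAtFilter_nhdsWithin measurableSet_Icc t).filter_mono
      (nhdsWithin_le_of_mem hIcc)
  · exact (hg t (Set.Ico_subset_Icc_self ht)).mono_of_mem_nhdsWithin hIcc

theorem eq_exp_integral_smul_of_hasDerivWithinAt_Ici {g : ℝ → ℝ} {f : ℝ → E} (hab : a ≤ b)
    (hg : ContinuousOn g (Set.Icc a b)) (hf : ContinuousOn f (Set.Icc a b))
    (hf' : ∀ t ∈ Set.Ico a b, HasDerivWithinAt f (g t • f t) (Set.Ici t) t) :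
    f b = Real.exp (∫ u in a..b, g u) • f a := by
  let G : ℝ → ℝ := fun r => ∫ u in a..r, g u
  have hG : ContinuousOn G (Set.Icc a b) := by
    rw [← Set.uIcc_of_le hab] at hg ⊢
    exact intervalIntegral.continuousOn_primitive_interval' hg.intervalIntegrable
      Set.left_mem_uIcc
  have hderiv : ∀ t ∈ Set.Ico a b,
      HasDerivWithinAt (fun r => Real.exp (-G r) • f r) 0 (Set.Ici t) t := by
    intro t ht
    have hG' : HasDerivWithinAt G (g t) (Set.Ici t) t :=
      hasDerivWithinAt_Ici_integral_of_continuousOn_Icc hg ht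
    refine (hG'.neg.exp.smul (hf' t ht)).congr_deriv ?_
    module
  have hconst : Real.exp (-G b) • f b = f a := by
    simpa [G] using constant_of_has_deriv_right_zero (hG.neg.rexp.smul hf) hderiv b
      (Set.right_mem_Icc.2 hab)
  rw [← hconst, smul_smul, ← Real.exp_add, add_neg_cancel, Real.exp_zero, one_smul]

end LinearODE

theorem hasDerivWithinAt_sub_of_mul_self_sub_mul {𝕜 A : Type*} [NontriviallyNormedField 𝕜]
    [NormedCommRing A] [NormedAlgebra 𝕜 A] {x z : 𝕜 → A} {c : A} {S : Set 𝕜} {t : 𝕜}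
    (hx : HasDerivWithinAt x (x t * x t - c * x t) S t)
    (hz : HasDerivWithinAt z (z t * z t - c * z t) S t) :
    HasDerivWithinAt (fun u => x u - z u) ((x t - z t) * (x t + z t - c)) S t :=
  (hx.sub hz).congr_deriv (by ring)

theorem sub_eq_sub_mul_exp_integral {x z s : ℝ → ℝ} {a b : ℝ} (hab : a ≤ b)
    (hs : ContinuousOn s (Set.Icc a b))
    (hx : ContinuousOn x (Set.Icc a b)) (hz : ContinuousOn z (Set.Icc a b))
    (hx' : ∀ t ∈ Set.Ico a b, HasDerivWithinAt x (x t * x t - s t * x t) (Set.Ici t) t)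
    (hz' : ∀ t ∈ Set.Ico a b, HasDerivWithinAt z (z t * z t - s t * z t) (Set.Ici t) t) :
    x b - z b = (x a - z a) * Real.exp (∫ u in a..b, (x u + z u - s u)) := by
  have hlinear : ∀ t ∈ Set.Ico a b, HasDerivWithinAt (fun u => x u - z u)
      ((x t + z t - s t) • (x t - z t)) (Set.Ici t) t := fun t ht => by
    rw [smul_eq_mul, mul_comm]
    exact hasDerivWithinAt_sub_of_mul_self_sub_mul (hx' t ht) (hz' t ht)
  rw [mul_comm]
  exact eq_exp_integral_smul_of_hasDerivWithinAt_Ici hab ((hx.add hz).sub hs) (hx.sub hz) hlinear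

theorem collision_flow_order_preservation_general {ι : Type*} {y : ℝ → ι → ℝ} {s : ℝ → ℝ}
    (hs : ContinuousOn s (Set.Ici 0))
    (hflow : ∀ τ ≥ (0 : ℝ), ∀ i, HasDerivAt (fun u => y u i)
      (y τ i * y τ i - s τ * y τ i) τ) :
    (∀ i j, ∀ τ ≥ (0 : ℝ), HasDerivAt (fun u => y u i - y u j)
      ((y τ i - y τ j) * (y τ i + y τ j - s τ)) τ) ∧
    (∀ i j, ∀ τ ≥ (0 : ℝ), y τ i - y τ j =
      (y 0 i - y 0 j) * Real.exp (∫ u in (0 : ℝ)..τ, (y u i + y u j - s u))) ∧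
    (∀ i j, ∀ τ ≥ (0 : ℝ), Real.sign (y τ i - y τ j) = Real.sign (y 0 i - y 0 j)) ∧
    (∀ i j, y 0 i < y 0 j → ∀ τ ≥ (0 : ℝ), y τ i < y τ j) := by
  have hexp : ∀ i j, ∀ τ ≥ (0 : ℝ), y τ i - y τ j =
      (y 0 i - y 0 j) * Real.exp (∫ u in (0 : ℝ)..τ, (y u i + y u j - s u)) := fun i j τ hτ =>
    sub_eq_sub_mul_exp_integral hτ (hs.mono Set.Icc_subset_Ici_self)
      (HasDerivAt.continuousOn fun t ht => hflow t ht.1 i)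
      (HasDerivAt.continuousOn fun t ht => hflow t ht.1 j)
      (fun t ht => (hflow t ht.1 i).hasDerivWithinAt)
      (fun t ht => (hflow t ht.1 j).hasDerivWithinAt)
  refine ⟨fun i j τ hτ => ?_, hexp, fun i j τ hτ => ?_, fun i j hij τ hτ => ?_⟩
  · rw [← hasDerivWithinAt_univ]
    exact hasDerivWithinAt_sub_of_mul_self_sub_mul (hflow τ hτ i).hasDerivWithinAt
      (hflow τ hτ j).hasDerivWithinAt
  · rw [hexp i j τ hτ, real_sign_mul_of_pos_right _ (Real.exp_pos _)]
  · rw [← sub_pos, hexp j i τ hτ]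
    exact mul_pos (sub_pos.2 hij) (Real.exp_pos _)

/-- Order preservation along the collision flow
`dy/dτ = y ⊙ y − s₂(y)·y`: for `i ≠ j`, `δ_{ij} := y_i − y_j` satisfies
`δ_{ij}′ = δ_{ij}(y_i + y_j − s₂)`, hence
`δ_{ij}(τ) = δ_{ij}(0)·exp(∫₀^τ (y_i + y_j − s₂) du)`;
in particular the sign of `y_i − y_j` is preserved, and the unique initial
maximizer remains the strict maximizer for all `τ ≥ 0`. -/
theorem collision_flow_order_preservation {K : ℕ} (hK : 0 < K)
    (y : ℝ → Fin K → ℝ)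
    (hsimp : ∀ τ ≥ (0:ℝ), y τ ∈ stdSimplex ℝ (Fin K))
    (hflow : ∀ τ ≥ (0:ℝ), ∀ i, HasDerivAt (fun u => y u i)
      (y τ i * y τ i - (∑ k, y τ k ^ 2) * y τ i) τ) :
    (∀ i j : Fin K, i ≠ j → ∀ τ ≥ (0:ℝ),
      HasDerivAt (fun u => y u i - y u j)
        ((y τ i - y τ j) * (y τ i + y τ j - ∑ k, y τ k ^ 2)) τ) ∧
    (∀ i j : Fin K, i ≠ j → ∀ τ ≥ (0:ℝ),
      y τ i - y τ j = (y 0 i - y 0 j) *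
        Real.exp (∫ u in (0:ℝ)..τ, (y u i + y u j - ∑ k, y u k ^ 2))) ∧
    (∀ i j : Fin K, i ≠ j → ∀ τ ≥ (0:ℝ),
      Real.sign (y τ i - y τ j) = Real.sign (y 0 i - y 0 j)) ∧
    (∀ m : Fin K, (∀ i, i ≠ m → y 0 i < y 0 m) →
      ∀ τ ≥ (0:ℝ), ∀ i, i ≠ m → y τ i < y τ m) := by
  have hs₂ : ContinuousOn (fun τ => ∑ k, y τ k ^ 2) (Set.Ici 0) :=
    continuousOn_finsetSum _ fun k _ => (HasDerivAt.continuousOn fun τ hτ => hflow τ hτ k).pow 2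
  obtain ⟨hderiv, hexp, hsign, hlt⟩ := collision_flow_order_preservation_general hs₂ hflow
  exact ⟨fun i j _ => hderiv i j, fun i j _ => hexp i j, fun i j _ => hsign i j,
    fun m hm τ hτ i hi => hlt i m (hm i hi) τ hτ⟩
end

section
/- Let κ : [0,∞) → ℝ be continuous and let y : [0,∞) → Δ^{K−1} be a differentiable solution of dy/dt = κ(t)·(y ⊙ y − s₂(y)·y). Define Φ(y) := (1/2)·Σ_i y_i². Then for all t, d/dt Φ(y(t)) = κ(t)·(s₃(t) − s₂(t)²) = κ(t)·Σ_i y_i(t)·(y_i(t) − s₂(t))², where s₂ = Σ_i y_i² and s₃ = Σ_i y_i³. In particular, if κ(t) ≥ 0 for all t then Φ(y(t)) is nondecreasing, and at any time t the derivative vanishes if and only if κ(t) = 0 or y(t) is uniform on its support. -/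
open Finset

/-!
The power sums enter through one observation: on the simplex `y` is itself a probability vector,
and `s₃ - s₂²` is the variance of the function `y` under the weights `y`. Hence it is nonnegative,
and it vanishes exactly when `y` is constant on its support. Along the flow,
`dΦ/dt = ⟨y, dy/dt⟩ = κ (s₃ - s₂²)`.
-/

section WeightedVariance

variable {ι R : Type*} {s : Finset ι} {w : ι → R}

theorem sum_mul_sq_sub_sq_sum_mul [CommRing R] (hw : ∑ i ∈ s, w i = 1) (f : ι → R) :
    ∑ i ∈ s, w i * f i ^ 2 - (∑ i ∈ s, w i * f i) ^ 2 =
      ∑ i ∈ s, w i * (f i - ∑ j ∈ s, w j * f j) ^ 2 := by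
  generalize hm : ∑ i ∈ s, w i * f i = m
  have expand (i : ι) :
      w i * (f i - m) ^ 2 = w i * f i ^ 2 - 2 * m * (w i * f i) + m ^ 2 * w i := by ring
  simp only [expand, sum_add_distrib, sum_sub_distrib, ← mul_sum, hw, hm]
  ring

theorem sum_mul_sub_sq_eq_zero_iff [CommRing R] [LinearOrder R] [IsStrictOrderedRing R]
    (hw : ∀ i ∈ s, 0 ≤ w i) (f : ι → R) (c : R) :
    ∑ i ∈ s, w i * (f i - c) ^ 2 = 0 ↔ ∀ i ∈ s, w i = 0 ∨ f i = c := by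
  rw [sum_eq_zero_iff_of_nonneg fun i hi => mul_nonneg (hw i hi) (sq_nonneg _)]
  simp only [mul_eq_zero, sq_eq_zero_iff, sub_eq_zero]

end WeightedVariance

section UniformOnSupport

variable {ι R : Type*} [Fintype ι] [Field R]

/-- The vector `x` is the uniform probability vector on some nonempty set of indices, which is
then its support (in characteristic zero). -/
def IsUniformOnSupport (x : ι → R) : Prop :=
  ∃ S : Finset ι, S.Nonempty ∧ (∀ i ∈ S, x i = 1 / (S.card : R)) ∧ ∀ i ∉ S, x i = 0

variable {x : ι → R}

theorem isUniformOnSupport_of_forall_eq_zero_or_eq {c : R} (hsum : ∑ i, x i = 1)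
    (hx : ∀ i, x i = 0 ∨ x i = c) : IsUniformOnSupport x := by
  classical
  let S : Finset ι := {i | x i ≠ 0}
  have eq_c : ∀ i ∈ S, x i = c := fun i hi => (hx i).resolve_left (mem_filter_univ i |>.1 hi)
  have card_mul : (S.card : R) * c = 1 := by
    rw [← nsmul_eq_mul, ← sum_const, ← sum_congr rfl eq_c, sum_filter_ne_zero, hsum]
  refine ⟨S, ?_, fun i hi => ?_, fun i hi => by simpa [S] using hi⟩
  · by_contra! hS
    simp [hS] at card_mul
  · rw [eq_c i hi, eq_one_div_of_mul_eq_one_right card_mul]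

theorem IsUniformOnSupport.eq_zero_or_eq_sum_sq [CharZero R] (hx : IsUniformOnSupport x) (i : ι) :
    x i = 0 ∨ x i = ∑ j, x j ^ 2 := by
  obtain ⟨S, hS, on_S, off_S⟩ := hx
  have card_ne_zero : (S.card : R) ≠ 0 := Nat.cast_ne_zero.2 hS.card_ne_zero
  have sum_sq : ∑ j, x j ^ 2 = 1 / (S.card : R) := calc
    ∑ j, x j ^ 2 = ∑ j ∈ S, x j ^ 2 :=
      (sum_subset (subset_univ S) fun j _ hj => by simp [off_S j hj]).symm
    _ = ∑ _j ∈ S, (1 / (S.card : R)) ^ 2 := sum_congr rfl fun j hj => by rw [on_S j hj]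
    _ = 1 / (S.card : R) := by
      rw [sum_const, nsmul_eq_mul]
      field_simp
  rw [sum_sq]
  exact (em (i ∈ S)).symm.imp (off_S i) (on_S i)

theorem isUniformOnSupport_iff_forall_eq_zero_or_eq_sum_sq [CharZero R] (hsum : ∑ i, x i = 1) :
    IsUniformOnSupport x ↔ ∀ i, x i = 0 ∨ x i = ∑ j, x j ^ 2 :=
  ⟨IsUniformOnSupport.eq_zero_or_eq_sum_sq, isUniformOnSupport_of_forall_eq_zero_or_eq hsum⟩

end UniformOnSupport

section PowerSums

variable {ι R : Type*} [Fintype ι] {x : ι → R}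

theorem sum_cube_sub_sq_sum_sq [CommRing R] (hsum : ∑ i, x i = 1) :
    ∑ i, x i ^ 3 - (∑ i, x i ^ 2) ^ 2 = ∑ i, x i * (x i - ∑ j, x j ^ 2) ^ 2 := by
  simpa only [← pow_succ', ← sq] using sum_mul_sq_sub_sq_sum_mul hsum x

variable [Field R] [LinearOrder R] [IsStrictOrderedRing R]

theorem sum_cube_sub_sq_sum_sq_nonneg (hx : x ∈ stdSimplex R ι) :
    0 ≤ ∑ i, x i ^ 3 - (∑ i, x i ^ 2) ^ 2 := by
  rw [sum_cube_sub_sq_sum_sq hx.2]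
  exact sum_nonneg fun i _ => mul_nonneg (hx.1 i) (sq_nonneg _)

theorem sum_cube_sub_sq_sum_sq_eq_zero_iff (hx : x ∈ stdSimplex R ι) :
    ∑ i, x i ^ 3 - (∑ i, x i ^ 2) ^ 2 = 0 ↔ IsUniformOnSupport x := by
  rw [sum_cube_sub_sq_sum_sq hx.2, sum_mul_sub_sq_eq_zero_iff fun i _ => hx.1 i,
    isUniformOnSupport_iff_forall_eq_zero_or_eq_sum_sq hx.2]
  simp only [mem_univ, true_imp_iff]

end PowerSums

section CollisionFlow

variable {ι : Type*} [Fintype ι]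

theorem sum_mul_collisionField {R : Type*} [CommRing R] (x : ι → R) :
    ∑ i, x i * collisionField x i = ∑ i, x i ^ 3 - (∑ i, x i ^ 2) ^ 2 := by
  have expand (i : ι) : x i * collisionField x i = x i ^ 3 - (∑ k, x k ^ 2) * x i ^ 2 := by
    rw [collisionField]
    ring
  simp only [expand, sum_sub_distrib, ← mul_sum, ← sq]

theorem hasDerivWithinAt_sum_sq {𝕜 𝔸 : Type*} [NontriviallyNormedField 𝕜] [NormedCommRing 𝔸]
    [NormedAlgebra 𝕜 𝔸] {y : 𝕜 → ι → 𝔸} {y' : ι → 𝔸} {s : Set 𝕜} {t : 𝕜}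
    (hy : HasDerivWithinAt y y' s t) :
    HasDerivWithinAt (fun u => ∑ k, y u k ^ 2) (2 * ∑ k, y t k * y' k) s t := by
  have hsum := HasDerivWithinAt.fun_sum (u := univ) fun k _ =>
    (hasDerivWithinAt_pi.1 hy k).fun_pow 2
  refine hsum.congr_deriv ?_
  simp only [Nat.cast_ofNat, Nat.add_one_sub_one, pow_one, mul_assoc, mul_sum]

variable {y : ℝ → ι → ℝ} {s : Set ℝ} {t : ℝ}

theorem hasDerivWithinAt_half_sum_sq_of_collisionField {c : ℝ}
    (hy : HasDerivWithinAt y (c • collisionField (y t)) s t) :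
    HasDerivWithinAt (fun u => (1 / 2) * ∑ k, y u k ^ 2)
      (c * ((∑ k, y t k ^ 3) - (∑ k, y t k ^ 2) ^ 2)) s t := by
  have inner_eq : ∑ k, y t k * (c • collisionField (y t)) k =
      c * ((∑ k, y t k ^ 3) - (∑ k, y t k ^ 2) ^ 2) := by
    simp only [Pi.smul_apply, smul_eq_mul, mul_left_comm _ c, ← mul_sum, sum_mul_collisionField]
  refine ((hasDerivWithinAt_sum_sq hy).const_mul (1 / 2)).congr_deriv ?_
  rw [inner_eq]
  ring

/-- Derivatives are taken within `s`: the choice `s = D` makes them one-sided at the endpoints of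
the time interval `D`, while `s = Set.univ` makes them two-sided. -/
theorem collision_flow_lyapunov_general {D : Set ℝ} (hD : Convex ℝ D) (hDs : D ⊆ s)
    {κ : ℝ → ℝ} (hsimp : ∀ t ∈ D, y t ∈ stdSimplex ℝ ι)
    (hflow : ∀ t ∈ D, HasDerivWithinAt y (κ t • collisionField (y t)) s t) :
    (∀ t ∈ D, HasDerivWithinAt (fun u => (1 / 2) * ∑ k, y u k ^ 2)
      (κ t * ((∑ k, y t k ^ 3) - (∑ k, y t k ^ 2) ^ 2)) s t) ∧
    (∀ t ∈ D, κ t * ((∑ k, y t k ^ 3) - (∑ k, y t k ^ 2) ^ 2) =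
      κ t * ∑ k, y t k * (y t k - ∑ j, y t j ^ 2) ^ 2) ∧
    ((∀ t ∈ D, 0 ≤ κ t) → MonotoneOn (fun t => (1 / 2) * ∑ k, y t k ^ 2) D) ∧
    (∀ t ∈ D, κ t * ((∑ k, y t k ^ 3) - (∑ k, y t k ^ 2) ^ 2) = 0 ↔
      κ t = 0 ∨ IsUniformOnSupport (y t)) := by
  have hderiv t (ht : t ∈ D) := hasDerivWithinAt_half_sum_sq_of_collisionField (hflow t ht)
  refine ⟨hderiv, fun t ht => ?_, fun hκ => ?_, fun t ht => ?_⟩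
  · rw [sum_cube_sub_sq_sum_sq (hsimp t ht).2]
  · have hint : interior D ⊆ D := interior_subset
    exact monotoneOn_of_hasDerivWithinAt_nonneg hD
      (fun t ht => (hderiv t ht).continuousWithinAt.mono hDs)
      (fun t ht => (hderiv t (hint ht)).mono (hint.trans hDs))
      (fun t ht => mul_nonneg (hκ t (hint ht)) (sum_cube_sub_sq_sum_sq_nonneg (hsimp t (hint ht))))
  · rw [mul_eq_zero, sum_cube_sub_sq_sum_sq_eq_zero_iff (hsimp t ht)]

end CollisionFlow

/-- Lyapunov structure of the time-rescaled collision flow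
`dy/dt = κ(t)·(y ⊙ y − s₂(y)·y)` with potential `Φ(y) = (1/2)Σ y_i²`:
`d/dt Φ(y(t)) = κ(t)(s₃ − s₂²) = κ(t)·Σ y_i(y_i − s₂)²`; if `κ ≥ 0` then
`Φ(y(t))` is nondecreasing (on `[0,∞)`); and at any time the derivative
vanishes iff `κ(t) = 0` or `y(t)` is uniform on its support. -/
theorem collision_flow_lyapunov {K : ℕ} (hK : 0 < K)
    (κ : ℝ → ℝ) (hκ : Continuous κ)
    (y : ℝ → Fin K → ℝ)
    (hsimp : ∀ t ≥ (0:ℝ), y t ∈ stdSimplex ℝ (Fin K))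
    (hflow : ∀ t ≥ (0:ℝ), ∀ i, HasDerivAt (fun u => y u i)
      (κ t * (y t i * y t i - (∑ k, y t k ^ 2) * y t i)) t) :
    (∀ t ≥ (0:ℝ), HasDerivAt (fun u => (1 / 2) * ∑ k, y u k ^ 2)
      (κ t * ((∑ k, y t k ^ 3) - (∑ k, y t k ^ 2) ^ 2)) t) ∧
    (∀ t ≥ (0:ℝ), κ t * ((∑ k, y t k ^ 3) - (∑ k, y t k ^ 2) ^ 2) =
      κ t * ∑ k, y t k * (y t k - ∑ j, y t j ^ 2) ^ 2) ∧
    ((∀ t ≥ (0:ℝ), 0 ≤ κ t) →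
      MonotoneOn (fun t => (1 / 2) * ∑ k, y t k ^ 2) (Set.Ici 0)) ∧
    (∀ t ≥ (0:ℝ),
      (κ t * ((∑ k, y t k ^ 3) - (∑ k, y t k ^ 2) ^ 2) = 0 ↔
        κ t = 0 ∨ ∃ S : Finset (Fin K), S.Nonempty ∧
          (∀ i ∈ S, y t i = 1 / (S.card : ℝ)) ∧ ∀ i ∉ S, y t i = 0)) := by
  simpa only [hasDerivWithinAt_univ, Set.mem_Ici, ge_iff_le, IsUniformOnSupport] using
    collision_flow_lyapunov_general (convex_Ici 0) (Set.subset_univ _) hsimp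
      fun t ht => (hasDerivAt_pi.2 (hflow t ht)).hasDerivWithinAt
end

section
/- Let β > 0, ℓ_ref ∈ ℝ, and let h : (0,1) → ℝ be continuous and bounded. Define p_ref := e^{ℓ_ref}/(1 + e^{ℓ_ref}) ∈ (0,1). Then: (i) there exists p* ∈ (0,1) with β·(log(p*/(1−p*)) − ℓ_ref) = h(p*); (ii) if moreover the map p ↦ β·log(p/(1−p)) − h(p) is strictly increasing on (0,1), then p* is unique; (iii) any such solution p* satisfies p* > p_ref when h(p*) > 0, p* < p_ref when h(p*) < 0, and p* = p_ref when h ≡ 0. In particular, if h > 0 everywhere on (0,1) (the anti-learning case J < 0 of the KL-regularized GRPO bad-mass ODE) then every equilibrium satisfies p_ref < p* < 1, so the KL penalty prevents collapse to p = 1. -/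
/-!
The log-odds `log (p / (1 - p))` increase from `-∞` to `+∞` on `(0, 1)`, with inverse the sigmoid.
Existence of an equilibrium is the intermediate value theorem: near `0` and `1` the divergent KL
term dominates the bounded drive `h`. The position of an equilibrium relative to
`p_ref = sigmoid ℓ_ref` is read off by comparing log-odds, since the balance equation makes the
sign of `log (p / (1 - p)) - ℓ_ref` that of `h p`.
-/

open Filter Set Topology

theorem exists_eq_of_tendsto_atBot_atTop_of_isBoundedUnder {X α : Type*} [TopologicalSpace X]
    [LinearOrder α] [TopologicalSpace α] [OrderClosedTopology α] {s : Set X}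
    (hs : IsPreconnected s) {l₁ l₂ : Filter X} [NeBot l₁] [NeBot l₂] (hl₁ : l₁ ≤ 𝓟 s)
    (hl₂ : l₂ ≤ 𝓟 s) {f g : X → α} (hf : ContinuousOn f s) (hg : ContinuousOn g s)
    (hf₁ : Tendsto f l₁ atBot) (hf₂ : Tendsto f l₂ atTop)
    (hg₁ : l₁.IsBoundedUnder (· ≥ ·) g) (hg₂ : l₂.IsBoundedUnder (· ≤ ·) g) :
    ∃ x ∈ s, f x = g x := by
  obtain ⟨m, hm⟩ := hg₁.eventually_ge
  obtain ⟨M, hM⟩ := hg₂.eventually_le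
  exact hs.intermediate_value₂_eventually₂ hl₁ hl₂ hf hg
    (EventuallyLE.trans (hf₁.eventually_le_atBot m) hm)
    (EventuallyLE.trans hM (hf₂.eventually_ge_atTop M))

/-- The log-odds of a probability `p`, the inverse of `Real.sigmoid` on `(0, 1)`. Outside `(0, 1)`
it takes the values dictated by `x / 0 = 0` and `Real.log x = Real.log |x|`. -/
noncomputable def logit (p : ℝ) : ℝ := Real.log (p / (1 - p))

theorem sigmoid_logit {p : ℝ} (hp : p ∈ Ioo 0 1) : Real.sigmoid (logit p) = p := by
  have hp₀ : 0 < p := hp.1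
  have hp₁ : 0 < 1 - p := sub_pos.2 hp.2
  rw [logit, Real.sigmoid_def, Real.exp_neg, Real.exp_log (div_pos hp₀ hp₁)]
  field_simp
  ring

theorem sigmoid_lt_iff_lt_logit {x p : ℝ} (hp : p ∈ Ioo 0 1) :
    Real.sigmoid x < p ↔ x < logit p := by
  rw [← Real.sigmoid_lt_iff (a := x), sigmoid_logit hp]

theorem lt_sigmoid_iff_logit_lt {x p : ℝ} (hp : p ∈ Ioo 0 1) :
    p < Real.sigmoid x ↔ logit p < x := by
  rw [← Real.sigmoid_lt_iff (a := logit p), sigmoid_logit hp]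

theorem eq_sigmoid_iff_logit_eq {x p : ℝ} (hp : p ∈ Ioo 0 1) :
    p = Real.sigmoid x ↔ logit p = x := by
  rw [← Real.sigmoid_inj (a := logit p), sigmoid_logit hp]

theorem exp_div_one_add_exp_eq_sigmoid (x : ℝ) :
    Real.exp x / (1 + Real.exp x) = Real.sigmoid x := by
  rw [Real.sigmoid_def, Real.exp_neg]
  field_simp
  ring

theorem continuousOn_logit : ContinuousOn logit (Ioo 0 1) := by
  have h_denom : ∀ p ∈ Ioo (0 : ℝ) 1, 1 - p ≠ 0 := fun p hp ↦ (sub_pos.2 hp.2).ne'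
  exact (continuousOn_id.div (by fun_prop) h_denom).log
    fun p hp ↦ div_ne_zero hp.1.ne' (h_denom p hp)

theorem tendsto_logit_nhdsGT_zero : Tendsto logit (𝓝[>] 0) atBot := by
  have h_odds : Tendsto (fun p : ℝ ↦ p / (1 - p)) (𝓝[>] 0) (𝓝[≠] 0) := by
    refine tendsto_nhdsWithin_iff.2 ⟨?_, ?_⟩
    · have h_cont : ContinuousAt (fun p : ℝ ↦ p / (1 - p)) 0 := by fun_prop (disch := norm_num)
      simpa using h_cont.tendsto.mono_left nhdsWithin_le_nhds
    · filter_upwards [Ioo_mem_nhdsGT zero_lt_one] with p hp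
      exact div_ne_zero hp.1.ne' (sub_pos.2 hp.2).ne'
  exact Real.tendsto_log_nhdsNE_zero.comp h_odds

theorem logit_one_sub (p : ℝ) : logit (1 - p) = -logit p := by
  rw [logit, logit, sub_sub_cancel, ← Real.log_inv, inv_div]

theorem tendsto_logit_nhdsLT_one : Tendsto logit (𝓝[<] 1) atTop := by
  have h_reflect : Tendsto (fun p : ℝ ↦ 1 - p) (𝓝[<] 1) (𝓝[>] 0) := by
    refine tendsto_nhdsWithin_iff.2 ⟨?_, ?_⟩
    · have h_cont : Continuous fun p : ℝ ↦ 1 - p := by fun_prop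
      simpa using (h_cont.tendsto 1).mono_left nhdsWithin_le_nhds
    · filter_upwards [self_mem_nhdsWithin] with p (hp : p < 1) using sub_pos.2 hp
  refine (tendsto_neg_atBot_atTop.comp (tendsto_logit_nhdsGT_zero.comp h_reflect)).congr fun p ↦ ?_
  simp only [Function.comp_apply, logit_one_sub, neg_neg]

/-- `p` is an interior equilibrium of the KL-regularized GRPO bad-mass dynamics with KL strength
`β`, reference log-odds `ℓref` and reward-driven term `h`: the bad-mass velocity, divided by the
nonvanishing factor `p * (1 - p)`, is zero. -/
structure IsInteriorEquilibrium (β ℓref : ℝ) (h : ℝ → ℝ) (p : ℝ) : Prop where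
  mem_Ioo : p ∈ Ioo 0 1
  balance : β * (logit p - ℓref) = h p

section InteriorEquilibrium

variable {β ℓref p q : ℝ} {h : ℝ → ℝ}

theorem exists_isInteriorEquilibrium (hβ : 0 < β) (hcont : ContinuousOn h (Ioo 0 1))
    (h_zero : (𝓝[>] 0).IsBoundedUnder (· ≥ ·) h) (h_one : (𝓝[<] 1).IsBoundedUnder (· ≤ ·) h) :
    ∃ p, IsInteriorEquilibrium β ℓref h p := by
  have hkl_zero : Tendsto (fun p ↦ β * (logit p - ℓref)) (𝓝[>] 0) atBot :=
    (tendsto_atBot_add_const_right _ (-ℓref) tendsto_logit_nhdsGT_zero).const_mul_atBot hβ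
  have hkl_one : Tendsto (fun p ↦ β * (logit p - ℓref)) (𝓝[<] 1) atTop :=
    (tendsto_atTop_add_const_right _ (-ℓref) tendsto_logit_nhdsLT_one).const_mul_atTop hβ
  obtain ⟨p, hp, hbal⟩ := exists_eq_of_tendsto_atBot_atTop_of_isBoundedUnder isPreconnected_Ioo
    (le_principal_iff.2 (Ioo_mem_nhdsGT zero_lt_one))
    (le_principal_iff.2 (Ioo_mem_nhdsLT zero_lt_one))
    (continuousOn_const.mul (continuousOn_logit.sub continuousOn_const)) hcont
    hkl_zero hkl_one h_zero h_one
  exact ⟨p, hp, hbal⟩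

namespace IsInteriorEquilibrium

theorem eq_of_injOn (hp : IsInteriorEquilibrium β ℓref h p) (hq : IsInteriorEquilibrium β ℓref h q)
    (hinj : InjOn (fun x ↦ β * logit x - h x) (Ioo 0 1)) : p = q :=
  hinj hp.mem_Ioo hq.mem_Ioo <| by linarith only [hp.balance, hq.balance]

theorem sigmoid_lt_iff (hp : IsInteriorEquilibrium β ℓref h p) (hβ : 0 < β) :
    Real.sigmoid ℓref < p ↔ 0 < h p := by
  rw [sigmoid_lt_iff_lt_logit hp.mem_Ioo, ← hp.balance, mul_pos_iff_of_pos_left hβ, sub_pos]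

theorem lt_sigmoid_iff (hp : IsInteriorEquilibrium β ℓref h p) (hβ : 0 < β) :
    p < Real.sigmoid ℓref ↔ h p < 0 := by
  rw [lt_sigmoid_iff_logit_lt hp.mem_Ioo, ← hp.balance, ← smul_eq_mul, smul_neg_iff_of_pos_left hβ,
    sub_neg]

theorem eq_sigmoid_iff (hp : IsInteriorEquilibrium β ℓref h p) (hβ : β ≠ 0) :
    p = Real.sigmoid ℓref ↔ h p = 0 := by
  rw [eq_sigmoid_iff_logit_eq hp.mem_Ioo, ← hp.balance, mul_eq_zero_iff_left hβ, sub_eq_zero]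

end IsInteriorEquilibrium

end InteriorEquilibrium

/-- KL-regularized interior equilibria. Let `β > 0`,
`ℓ_ref ∈ ℝ`, `h : (0,1) → ℝ` continuous and bounded, and
`p_ref = e^{ℓ_ref}/(1+e^{ℓ_ref})`. Then:
(i) there exists `p* ∈ (0,1)` with `β(log(p*/(1−p*)) − ℓ_ref) = h(p*)`;
(ii) if `p ↦ β·log(p/(1−p)) − h(p)` is strictly increasing on `(0,1)` then the
solution is unique;
(iii) any solution satisfies `p* > p_ref` when `h(p*) > 0`, `p* < p_ref` when
`h(p*) < 0`, and `p* = p_ref` when `h ≡ 0`;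
(iv) if `h > 0` on `(0,1)` (the anti-learning case `J < 0`), every equilibrium
satisfies `p_ref < p* < 1`, so the KL penalty prevents collapse to `p = 1`. -/
theorem kl_interior_equilibrium (β ℓref : ℝ) (hβ : 0 < β)
    (h : ℝ → ℝ) (hcont : ContinuousOn h (Set.Ioo 0 1))
    (hbdd : ∃ C : ℝ, ∀ x ∈ Set.Ioo (0:ℝ) 1, |h x| ≤ C)
    (pref : ℝ) (hpref : pref = Real.exp ℓref / (1 + Real.exp ℓref)) :
    (∃ pstar ∈ Set.Ioo (0:ℝ) 1,
      β * (Real.log (pstar / (1 - pstar)) - ℓref) = h pstar) ∧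
    (StrictMonoOn (fun x => β * Real.log (x / (1 - x)) - h x) (Set.Ioo 0 1) →
      ∀ p₁ ∈ Set.Ioo (0:ℝ) 1, ∀ p₂ ∈ Set.Ioo (0:ℝ) 1,
        β * (Real.log (p₁ / (1 - p₁)) - ℓref) = h p₁ →
        β * (Real.log (p₂ / (1 - p₂)) - ℓref) = h p₂ → p₁ = p₂) ∧
    (∀ pstar ∈ Set.Ioo (0:ℝ) 1,
      β * (Real.log (pstar / (1 - pstar)) - ℓref) = h pstar →
      (0 < h pstar → pref < pstar) ∧
      (h pstar < 0 → pstar < pref) ∧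
      ((∀ x ∈ Set.Ioo (0:ℝ) 1, h x = 0) → pstar = pref)) ∧
    ((∀ x ∈ Set.Ioo (0:ℝ) 1, 0 < h x) →
      ∀ pstar ∈ Set.Ioo (0:ℝ) 1,
        β * (Real.log (pstar / (1 - pstar)) - ℓref) = h pstar →
        pref < pstar ∧ pstar < 1) := by
  rw [exp_div_one_add_exp_eq_sigmoid] at hpref
  subst hpref
  refine ⟨?existence, ?uniqueness, ?position, ?anti_learning⟩
  case existence =>
    obtain ⟨C, hC⟩ := hbdd
    have h_zero : (𝓝[>] 0).IsBoundedUnder (· ≥ ·) h := isBoundedUnder_of_eventually_ge <|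
      eventually_of_mem (Ioo_mem_nhdsGT zero_lt_one) fun x hx ↦ neg_le_of_abs_le (hC x hx)
    have h_one : (𝓝[<] 1).IsBoundedUnder (· ≤ ·) h := isBoundedUnder_of_eventually_le <|
      eventually_of_mem (Ioo_mem_nhdsLT zero_lt_one) fun x hx ↦ le_of_abs_le (hC x hx)
    obtain ⟨p, hp⟩ := exists_isInteriorEquilibrium (ℓref := ℓref) hβ hcont h_zero h_one
    exact ⟨p, hp.mem_Ioo, hp.balance⟩
  case uniqueness =>
    intro hmono p hp q hq hbal_p hbal_q
    exact IsInteriorEquilibrium.eq_of_injOn ⟨hp, hbal_p⟩ ⟨hq, hbal_q⟩ hmono.injOn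
  case position =>
    intro p hp hbal
    have heq : IsInteriorEquilibrium β ℓref h p := ⟨hp, hbal⟩
    exact ⟨(heq.sigmoid_lt_iff hβ).2, (heq.lt_sigmoid_iff hβ).2,
      fun h_zero ↦ (heq.eq_sigmoid_iff hβ.ne').2 (h_zero p hp)⟩
  case anti_learning =>
    intro h_pos p hp hbal
    have heq : IsInteriorEquilibrium β ℓref h p := ⟨hp, hbal⟩
    exact ⟨(heq.sigmoid_lt_iff hβ).2 (h_pos p hp), hp.2⟩
end
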